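/- Let p₁, p₂, r₁, r₂ ∈ (0,∞] satisfy r₁ ≤ min(1,p₁) and r₂ ≤ min(1,p₁,p₂), let c ∈ ℝ, and let f : ℝ² → ℂ be measurable with |f(x + (0,1))| = |f(x + (c,0))| for every x ∈ ℝ². Let a : ℤ² → ℂ and define g(x) = Σ_{j∈ℤ²} |a(j)|·|f(x − j)|. Then ‖g‖_{L^{p₁,p₂}(ℝ×[0,1])} ≤ ‖a‖_{ℓ^{r₁,r₂}(ℤ²)}·‖f‖_{L^{p₁,p₂}(ℝ×[0,1])}. -/

import Mathlib

open MeasureTheory ENNReal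

/-- The `L^p` quasi-norm of an `ℝ≥0∞`-valued function:
`(∫ g^p)^(1/p)` for `p < ∞`, and the essential supremum for `p = ∞`. -/
noncomputable def eLpNormENN {α : Type*} [MeasurableSpace α] (g : α → ℝ≥0∞)
    (p : ℝ≥0∞) (μ : Measure α) : ℝ≥0∞ :=
  if p = ⊤ then essSup g μ else (∫⁻ x, g x ^ p.toReal ∂μ) ^ (1 / p.toReal)

/-- Mixed `L^{p₁,p₂}` quasi-norm on `ℝ²`: the `L^{p₁}` norm in the first
variable is taken first (over `ℝ`, w.r.t. Lebesgue measure), followed by the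
`L^{p₂}` norm in the second variable w.r.t. the measure `μ₂`; taking
`μ₂ = volume.restrict (Set.Icc 0 1)` gives the mixed norm on the strip
`ℝ × [0,1]`. -/
noncomputable def mixedLNorm (h : ℝ × ℝ → ℝ≥0∞) (p₁ p₂ : ℝ≥0∞)
    (μ₂ : Measure ℝ) : ℝ≥0∞ :=
  eLpNormENN (fun x₂ => eLpNormENN (fun x₁ => h (x₁, x₂)) p₁ volume) p₂ μ₂

/-- Mixed `ℓ^{r₁,r₂}` quasi-norm on `ℤ²`: the `ℓ^{r₁}` norm in the first
index is taken first, followed by the `ℓ^{r₂}` norm in the second index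
(counting measure realizes the discrete sums/suprema). -/
noncomputable def mixedlNorm (c : ℤ × ℤ → ℝ≥0∞) (r₁ r₂ : ℝ≥0∞) : ℝ≥0∞ :=
  eLpNormENN
    (fun j₂ => eLpNormENN (fun j₁ => c (j₁, j₂)) r₁ (Measure.count : Measure ℤ))
    r₂ (Measure.count : Measure ℤ)

/-!
The echo relation says that `|f|` has period `(-c, 1)`, so every integer shift in the second
variable becomes a shift in the first one, and on each slice `x₂ = const` the function `g` is a
weighted sum of translates of `|f (·, x₂)|`. For `r ≤ min 1 p` the power `‖·‖_p ^ r` is countably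
subadditive: it is the norm of `|·| ^ r` in the genuine normed space `L^{p / r}`. Applying this
first to the sum over `j₁` and then to the sum over `j₂` bounds the slice of `g` by
`‖a‖_{ℓ^{r₁,r₂}}` times the slice of `f`, and the outer norm is monotone and homogeneous.
-/

lemma rpow_tsum_le_tsum_rpow {ι : Type*} (u : ι → ℝ≥0∞) {r : ℝ} (hr₀ : 0 < r) (hr₁ : r ≤ 1) :
    (∑' i, u i) ^ r ≤ ∑' i, u i ^ r := by
  rw [ENNReal.tsum_eq_iSup_sum, ← ENNReal.orderIsoRpow_apply r hr₀, OrderIso.map_iSup]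
  refine iSup_le fun s => ?_
  calc (∑ i ∈ s, u i) ^ r
      ≤ ∑ i ∈ s, u i ^ r :=
        Finset.le_sum_of_subadditive (· ^ r) (ENNReal.zero_rpow_of_pos hr₀).le
          (fun x y => ENNReal.rpow_add_le_add_rpow x y hr₀.le hr₁) s u
    _ ≤ ∑' i, u i ^ r := ENNReal.sum_le_tsum s

section ELpNorm

variable {α ι : Type*} [MeasurableSpace α] {μ : Measure α} {p : ℝ≥0∞}

lemma eLpNormENN_eq_eLpNorm (hp : p ≠ 0) (u : α → ℝ≥0∞) : eLpNormENN u p μ = eLpNorm u p μ := by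
  rcases eq_or_ne p ∞ with rfl | hp_top
  · simp [eLpNormENN, eLpNormEssSup_eq_essSup_enorm]
  · simp [eLpNormENN, hp_top, eLpNorm_eq_lintegral_rpow_enorm_toReal hp hp_top]

lemma eLpNorm_ennreal_const_mul {u : α → ℝ≥0∞} (hu : AEMeasurable u μ) (K : ℝ≥0∞) :
    eLpNorm (fun x => K * u x) p μ = K * eLpNorm u p μ := by
  rcases eq_or_ne p 0 with rfl | hp₀
  · simp
  rcases eq_or_ne p ∞ with rfl | hp_top
  · simp [eLpNormEssSup_eq_essSup_enorm, ENNReal.essSup_const_mul]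
  · have hp_pos : 0 < p.toReal := ENNReal.toReal_pos hp₀ hp_top
    simp only [eLpNorm_eq_lintegral_rpow_enorm_toReal hp₀ hp_top, enorm_eq_self,
      ENNReal.mul_rpow_of_nonneg _ _ hp_pos.le]
    rw [lintegral_const_mul'' _ (hu.pow_const _), ENNReal.mul_rpow_of_nonneg _ _ (by positivity),
      one_div, ENNReal.rpow_rpow_inv hp_pos.ne']

lemma eLpNorm_iSup_le_of_directed [Countable ι] {u : ι → α → ℝ≥0∞}
    (hu : ∀ i, AEMeasurable (u i) μ) (hdir : Directed (· ≤ ·) u) :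
    eLpNorm (fun x => ⨆ i, u i x) p μ ≤ ⨆ i, eLpNorm (u i) p μ := by
  rcases eq_or_ne p 0 with rfl | hp₀
  · simp
  rcases eq_or_ne p ∞ with rfl | hp_top
  · simp only [eLpNorm_exponent_top]
    refine essSup_le_of_ae_le _ ?_
    have hle : ∀ᵐ x ∂μ, ∀ i, u i x ≤ eLpNormEssSup (u i) μ :=
      ae_all_iff.2 fun i => ae_le_eLpNormEssSup
    filter_upwards [hle] with x hx using iSup_mono hx
  · have hp_pos : 0 < p.toReal := ENNReal.toReal_pos hp₀ hp_top
    have rpow_iSup (v : ι → ℝ≥0∞) {q : ℝ} (hq : 0 < q) : (⨆ i, v i) ^ q = ⨆ i, v i ^ q :=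
      (ENNReal.orderIsoRpow q hq).map_iSup v
    simp only [eLpNorm_eq_lintegral_rpow_enorm_toReal hp₀ hp_top, enorm_eq_self,
      rpow_iSup _ hp_pos]
    rw [lintegral_iSup_directed (fun i => (hu i).pow_const _), rpow_iSup _ (by positivity)]
    have rpow_mono : Monotone fun (v : α → ℝ≥0∞) x => v x ^ p.toReal :=
      fun v w hvw x => ENNReal.rpow_le_rpow (hvw x) hp_pos.le
    exact hdir.mono_comp (· ≤ ·) rpow_mono

lemma eLpNorm_tsum_le [Countable ι] {u : ι → α → ℝ≥0∞} (hu : ∀ i, AEMeasurable (u i) μ)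
    (hp : 1 ≤ p) : eLpNorm (fun x => ∑' i, u i x) p μ ≤ ∑' i, eLpNorm (u i) p μ := by
  have hdir : Directed (· ≤ ·) fun (s : Finset ι) x => ∑ i ∈ s, u i x :=
    Monotone.directed_le fun s t hst x => Finset.sum_le_sum_of_subset hst
  simp only [ENNReal.tsum_eq_iSup_sum (f := fun i => u i _)]
  calc eLpNorm (fun x => ⨆ s : Finset ι, ∑ i ∈ s, u i x) p μ
      ≤ ⨆ s : Finset ι, eLpNorm (fun x => ∑ i ∈ s, u i x) p μ :=
        eLpNorm_iSup_le_of_directed (fun s => Finset.aemeasurable_fun_sum s fun i _ => hu i) hdir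
    _ ≤ ⨆ s : Finset ι, ∑ i ∈ s, eLpNorm (u i) p μ := by
        refine iSup_mono fun s => ?_
        simpa only [Finset.sum_fn] using
          eLpNorm_sum_le (fun i _ => (hu i).aestronglyMeasurable) hp
    _ = ∑' i, eLpNorm (u i) p μ := ENNReal.tsum_eq_iSup_sum.symm

lemma eLpNorm_tsum_rpow_le [Countable ι] {u : ι → α → ℝ≥0∞} (hu : ∀ i, AEMeasurable (u i) μ)
    {r : ℝ} (hr₀ : 0 < r) (hr₁ : r ≤ 1) (hrp : ENNReal.ofReal r ≤ p) :
    eLpNorm (fun x => ∑' i, u i x) p μ ^ r ≤ ∑' i, eLpNorm (u i) p μ ^ r := by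
  have hr₀' : ENNReal.ofReal r ≠ 0 := (ENNReal.ofReal_pos.2 hr₀).ne'
  have hq : 1 ≤ p / ENNReal.ofReal r := by
    rwa [ENNReal.le_div_iff_mul_le (.inl hr₀') (.inl ofReal_ne_top), one_mul]
  have rpow_eLpNorm (v : α → ℝ≥0∞) :
      eLpNorm v p μ ^ r = eLpNorm (fun x => v x ^ r) (p / ENNReal.ofReal r) μ := by
    simpa only [enorm_eq_self, ENNReal.div_mul_cancel hr₀' ofReal_ne_top] using
      (eLpNorm_enorm_rpow (p := p / ENNReal.ofReal r) v hr₀).symm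
  simp only [rpow_eLpNorm]
  calc eLpNorm (fun x => (∑' i, u i x) ^ r) (p / ENNReal.ofReal r) μ
      ≤ eLpNorm (fun x => ∑' i, u i x ^ r) (p / ENNReal.ofReal r) μ :=
        eLpNorm_mono_enorm fun x => rpow_tsum_le_tsum_rpow _ hr₀ hr₁
    _ ≤ ∑' i, eLpNorm (fun x => u i x ^ r) (p / ENNReal.ofReal r) μ :=
        eLpNorm_tsum_le (fun i => (hu i).pow_const r) hq

lemma eLpNorm_count_rpow_toReal [MeasurableSpace ι] [MeasurableSingletonClass ι] {r : ℝ≥0∞}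
    (hr₀ : r ≠ 0) (hr_top : r ≠ ∞) (A : ι → ℝ≥0∞) :
    eLpNorm A r .count ^ r.toReal = ∑' i, A i ^ r.toReal := by
  rw [eLpNorm_eq_lintegral_rpow_enorm_toReal hr₀ hr_top, lintegral_count, one_div,
    ENNReal.rpow_inv_rpow (ENNReal.toReal_pos hr₀ hr_top).ne']
  rfl

lemma eLpNorm_tsum_le_eLpNorm_count_mul [Countable ι] [MeasurableSpace ι]
    [MeasurableSingletonClass ι] {u : ι → α → ℝ≥0∞} (hu : ∀ i, AEMeasurable (u i) μ) {r : ℝ≥0∞}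
    (hr₀ : r ≠ 0) (hr : r ≤ min 1 p) {A : ι → ℝ≥0∞} {N : ℝ≥0∞}
    (hN : ∀ i, eLpNorm (u i) p μ ≤ A i * N) :
    eLpNorm (fun x => ∑' i, u i x) p μ ≤ eLpNorm A r .count * N := by
  obtain ⟨hr₁, hrp⟩ := le_min_iff.1 hr
  have hr_top : r ≠ ∞ := ne_top_of_le_ne_top one_ne_top hr₁
  have hr_pos : 0 < r.toReal := ENNReal.toReal_pos hr₀ hr_top
  rw [← ENNReal.rpow_le_rpow_iff hr_pos]
  calc eLpNorm (fun x => ∑' i, u i x) p μ ^ r.toReal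
      ≤ ∑' i, eLpNorm (u i) p μ ^ r.toReal :=
        eLpNorm_tsum_rpow_le hu hr_pos (ENNReal.toReal_le_of_le_ofReal zero_le_one (by simpa))
          (by rwa [ENNReal.ofReal_toReal hr_top])
    _ ≤ ∑' i, (A i * N) ^ r.toReal := by gcongr with i; exact hN i
    _ = (eLpNorm A r .count * N) ^ r.toReal := by
        simp only [ENNReal.mul_rpow_of_nonneg _ _ hr_pos.le, ENNReal.tsum_mul_right,
          eLpNorm_count_rpow_toReal hr₀ hr_top]

lemma measurable_eLpNorm_prod_left {β : Type*} [MeasurableSpace β] [SFinite μ]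
    {h : α × β → ℝ≥0∞} (hh : Measurable h) :
    Measurable fun y => eLpNorm (fun x => h (x, y)) p μ := by
  rcases eq_or_ne p 0 with rfl | hp₀
  · simp
  rcases eq_or_ne p ∞ with rfl | hp_top
  · refine measurable_of_Iic fun t => ?_
    have eLpNorm_top_le_iff (y : β) :
        eLpNorm (fun x => h (x, y)) ∞ μ ≤ t ↔ μ {x | t < h (x, y)} = 0 := by
      simp only [eLpNorm_exponent_top, eLpNormEssSup_eq_essSup_enorm, enorm_eq_self, ← not_le,
        ← ae_iff]
      exact ⟨fun hle => (ENNReal.ae_le_essSup _).mono fun x hx => hx.trans hle,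
        essSup_le_of_ae_le t⟩
    have hlt : MeasurableSet {z : α × β | t < h z} := measurableSet_lt measurable_const hh
    simp only [Set.preimage, Set.mem_Iic, eLpNorm_top_le_iff]
    exact measurable_measure_prodMk_right hlt (measurableSet_singleton 0)
  · simp only [eLpNorm_eq_lintegral_rpow_enorm_toReal hp₀ hp_top, enorm_eq_self]
    exact (hh.pow_const p.toReal).lintegral_prod_left'.pow_const _

end ELpNorm

section Translates

variable {G : Type*} [AddGroup G] [MeasurableSpace G] [MeasurableAdd G] {μ : Measure G}
  [μ.IsAddRightInvariant] {p : ℝ≥0∞} {u : G → ℝ≥0∞}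

lemma eLpNorm_const_mul_comp_sub_right (hu : Measurable u) (K : ℝ≥0∞) (t : G) :
    eLpNorm (fun x => K * u (x - t)) p μ = K * eLpNorm u p μ := by
  have hsub : MeasurePreserving (· - t) μ μ := measurePreserving_sub_right μ t
  rw [← eLpNorm_comp_measurePreserving hu.aestronglyMeasurable hsub]
  exact eLpNorm_ennreal_const_mul (hu.comp hsub.measurable).aemeasurable K

lemma eLpNorm_tsum_mul_comp_sub_le {ι κ : Type*} [Countable ι] [Countable κ]
    [MeasurableSpace ι] [MeasurableSingletonClass ι]
    [MeasurableSpace κ] [MeasurableSingletonClass κ]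
    (hu : Measurable u) {r₁ r₂ : ℝ≥0∞} (hr₁₀ : r₁ ≠ 0) (hr₂₀ : r₂ ≠ 0)
    (hr₁ : r₁ ≤ min 1 p) (hr₂ : r₂ ≤ min 1 p) (A : ι × κ → ℝ≥0∞) (t : ι × κ → G) :
    eLpNorm (fun x => ∑' j, A j * u (x - t j)) p μ ≤
      eLpNorm (fun k => eLpNorm (fun i => A (i, k)) r₁ .count) r₂ .count * eLpNorm u p μ := by
  have hterm (j : ι × κ) : Measurable fun x => A j * u (x - t j) :=
    (hu.comp (measurePreserving_sub_right μ (t j)).measurable).const_mul _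
  simp only [ENNReal.tsum_prod', ENNReal.tsum_comm (α := ι)]
  refine eLpNorm_tsum_le_eLpNorm_count_mul
    (fun k => (Measurable.tsum fun i => hterm (i, k)).aemeasurable) hr₂₀ hr₂ fun k => ?_
  refine eLpNorm_tsum_le_eLpNorm_count_mul (fun i => (hterm (i, k)).aemeasurable) hr₁₀ hr₁
    fun i => ?_
  exact (eLpNorm_const_mul_comp_sub_right hu _ _).le

end Translates

section Echo

variable {β : Type*} {c : ℝ} {F : ℝ × ℝ → β}

lemma periodic_of_echo (hecho : ∀ x : ℝ × ℝ, F (x + (0, 1)) = F (x + (c, 0))) :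
    Function.Periodic F (-c, 1) := by
  rintro ⟨x, y⟩
  simpa [sub_eq_add_neg] using hecho (x - c, y)

lemma apply_sub_int_of_periodic (hF : Function.Periodic F (-c, 1)) (x y : ℝ) (m n : ℤ) :
    F ((x, y) - ((m : ℝ), (n : ℝ))) = F (x - (m + n * c), y) := by
  rw [← hF.sub_zsmul_eq n (x := (x - (m + n * c), y))]
  congr 1
  ext
  · simp only [Prod.fst_sub, Prod.smul_mk, zsmul_eq_mul]
    ring
  · simp

end Echo

theorem stmt_9_general {p₁ p₂ r₁ r₂ : ℝ≥0∞} (hp₂ : 0 < p₂) (hr₁ : 0 < r₁) (hr₂ : 0 < r₂)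
    (hr₁p : r₁ ≤ min 1 p₁) (hr₂p : r₂ ≤ min 1 p₁) (μ₂ : Measure ℝ) {c : ℝ}
    {F : ℝ × ℝ → ℝ≥0∞} (hF : Measurable F)
    (hecho : ∀ x : ℝ × ℝ, F (x + (0, 1)) = F (x + (c, 0))) (A : ℤ × ℤ → ℝ≥0∞) :
    mixedLNorm (fun x => ∑' j : ℤ × ℤ, A j * F (x - ((j.1 : ℝ), (j.2 : ℝ)))) p₁ p₂ μ₂ ≤
      mixedlNorm A r₁ r₂ * mixedLNorm F p₁ p₂ μ₂ := by
  have hp₁ : 0 < p₁ := hr₁.trans_le (hr₁p.trans (min_le_right _ _))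
  simp only [mixedLNorm, mixedlNorm, eLpNormENN_eq_eLpNorm hp₁.ne', eLpNormENN_eq_eLpNorm hp₂.ne',
    eLpNormENN_eq_eLpNorm hr₁.ne', eLpNormENN_eq_eLpNorm hr₂.ne',
    apply_sub_int_of_periodic (periodic_of_echo hecho)]
  rw [← eLpNorm_ennreal_const_mul (measurable_eLpNorm_prod_left hF).aemeasurable]
  refine eLpNorm_mono_enorm fun x₂ => ?_
  exact eLpNorm_tsum_mul_comp_sub_le (hF.comp measurable_prodMk_right) hr₁.ne' hr₂.ne' hr₁p hr₂p A
    fun j => j.1 + j.2 * c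

/-- Mixed-norm semi-discrete Young-type inequality on the strip `ℝ×[0,1]` for
an echo-periodic `f` (i.e. `|f(x+(0,1))| = |f(x+(c,0))|` for all `x`): if
`r₁ ≤ min(1,p₁)`, `r₂ ≤ min(1,p₁,p₂)` and `g(x) = Σ_{j∈ℤ²} |a(j)|·|f(x−j)|`,
then `‖g‖_{L^{p₁,p₂}(ℝ×[0,1])} ≤ ‖a‖_{ℓ^{r₁,r₂}}·‖f‖_{L^{p₁,p₂}(ℝ×[0,1])}`. -/
theorem stmt_9 (p₁ p₂ r₁ r₂ : ℝ≥0∞)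
    (hp₁ : 0 < p₁) (hp₂ : 0 < p₂) (hr₁ : 0 < r₁) (hr₂ : 0 < r₂)
    (hr₁p : r₁ ≤ min 1 p₁) (hr₂p : r₂ ≤ min 1 (min p₁ p₂)) (c : ℝ)
    (f : ℝ × ℝ → ℂ) (hf : Measurable f)
    (hecho : ∀ x : ℝ × ℝ, ‖f (x + ((0 : ℝ), (1 : ℝ)))‖ = ‖f (x + (c, (0 : ℝ)))‖)
    (a : ℤ × ℤ → ℂ)
    (g : ℝ × ℝ → ℝ≥0∞)
    (hg : ∀ x, g x = ∑' j : ℤ × ℤ,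
      (‖a j‖₊ : ℝ≥0∞) * (‖f (x - ((j.1 : ℝ), (j.2 : ℝ)))‖₊ : ℝ≥0∞)) :
    mixedLNorm g p₁ p₂ (volume.restrict (Set.Icc 0 1))
      ≤ mixedlNorm (fun j => (‖a j‖₊ : ℝ≥0∞)) r₁ r₂
          * mixedLNorm (fun x => (‖f x‖₊ : ℝ≥0∞)) p₁ p₂
              (volume.restrict (Set.Icc 0 1)) := by
  obtain rfl : g = _ := funext hg
  have hr₂p₁ : r₂ ≤ min 1 p₁ := hr₂p.trans (min_le_min_left 1 (min_le_left p₁ p₂))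
  exact stmt_9_general hp₂ hr₁ hr₂ hr₁p hr₂p₁ _ hf.nnnorm.coe_nnreal_ennreal
    (fun x => congrArg _ (NNReal.eq (hecho x))) _
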